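/- Let L ∈ L_{m,n} be a quantum channel with rank Z(L) = k which is not an extreme point of L_{m,n}. Then there exist quantum channels L_1, L_2 ∈ L_{m,n} with rank Z(L_1) ≤ k−1 and rank Z(L_2) ≤ k−1, and t ∈ (0,1), such that L = t·L_1 + (1−t)·L_2. -/

import Mathlib

open Matrix
open scoped ComplexOrder

/-- The Choi matrix of a linear map `L` from `m × m` to `n × n` complex matrices:
its `((i,p),(j,q))` entry is the `(p,q)` entry of `L(E_{ij})`. -/
def choi (m n : ℕ) (L : Matrix (Fin m) (Fin m) ℂ →ₗ[ℂ] Matrix (Fin n) (Fin n) ℂ) :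
    Matrix (Fin m × Fin n) (Fin m × Fin n) ℂ :=
  Matrix.of fun ip jq => L (Matrix.single ip.1 jq.1 (1 : ℂ)) ip.2 jq.2

/-- `L` is a quantum channel: it admits a Kraus representation
`L(X) = ∑ Aᵢ X Aᵢ*` with `∑ Aᵢ* Aᵢ = I`. -/
def IsChannel (m n : ℕ) (L : Matrix (Fin m) (Fin m) ℂ →ₗ[ℂ] Matrix (Fin n) (Fin n) ℂ) : Prop :=
  ∃ (k : ℕ) (A : Fin k → Matrix (Fin n) (Fin m) ℂ),
    (∀ X, L X = ∑ i, A i * X * (A i)ᴴ) ∧ ∑ i, (A i)ᴴ * A i = 1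

/-- `L` is an extreme point of the convex set of quantum channels. -/
def IsExtremeChannel (m n : ℕ)
    (L : Matrix (Fin m) (Fin m) ℂ →ₗ[ℂ] Matrix (Fin n) (Fin n) ℂ) : Prop :=
  IsChannel m n L ∧
    ∀ L₁ L₂ : Matrix (Fin m) (Fin m) ℂ →ₗ[ℂ] Matrix (Fin n) (Fin n) ℂ,
      IsChannel m n L₁ → IsChannel m n L₂ → ∀ t : ℝ, 0 < t → t < 1 →
      L = (t : ℂ) • L₁ + ((1 - t : ℝ) : ℂ) • L₂ → L₁ = L ∧ L₂ = L

/-!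
Identify a channel `L` with its Choi matrix `Z`; channels correspond to positive semidefinite `Z`
whose partial trace is the identity. If `L` lies strictly between two distinct channels, their
difference `D` is traceless and its Choi matrix vanishes on `ker Z`. Writing `Z = B Bᴴ` with `B` of
full column rank, the Choi matrix of `D` is `B H Bᴴ` with `H` Hermitian and not positive
semidefinite, so that of `L + s D` is `B (1 + s H) Bᴴ`. At the least `s > 0` making `1 + s H`
singular the ray leaves the set of channels and the rank drops. Doing this for `D` and `-D` gives
the two endpoints of a segment through `L`.
-/

section PosSemidef

variable {𝕜 ι κ : Type*} [RCLike 𝕜] [Fintype ι] [Fintype κ]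

lemma exists_eq_mul_diagonal_mul_conjTranspose_of_isHermitian {A : Matrix ι ι 𝕜}
    (hA : A.IsHermitian) :
    ∃ (V : Matrix ι (Fin A.rank) 𝕜) (d : Fin A.rank → ℝ), Vᴴ * V = 1 ∧ (∀ i, d i ≠ 0) ∧
      A = V * diagonal (fun i ↦ (d i : 𝕜)) * Vᴴ := by
  classical
  let e : Fin A.rank ≃ {i // hA.eigenvalues i ≠ 0} :=
    Fintype.equivOfCardEq (by rw [Fintype.card_fin, hA.rank_eq_card_non_zero_eigs])
  let f : Fin A.rank → ι := fun i ↦ e i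
  have hf : Function.Injective f := Subtype.val_injective.comp e.injective
  let U : Matrix ι ι 𝕜 := hA.eigenvectorUnitary
  have hU : Uᴴ * U = 1 := Unitary.coe_star_mul_self hA.eigenvectorUnitary
  have hspec : A = U * diagonal (fun i ↦ (hA.eigenvalues i : 𝕜)) * Uᴴ := by
    conv_lhs => rw [hA.spectral_theorem, Unitary.conjStarAlgAut_apply]
    rfl
  refine ⟨U.submatrix id f, hA.eigenvalues ∘ f, ?_, fun i ↦ (e i).2, ?_⟩
  · rw [conjTranspose_submatrix, ← submatrix_mul _ _ f id f Function.bijective_id, hU,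
      submatrix_one f hf]
  · ext a b
    conv_lhs => rw [hspec]
    simp only [mul_apply (M := _ * _), mul_diagonal]
    refine (Fintype.sum_of_injective f hf _ _ (fun i hi ↦ ?_) fun i ↦ rfl).symm
    have hi0 : hA.eigenvalues i = 0 := by
      by_contra h
      exact hi ⟨e.symm ⟨i, h⟩, by simp [f]⟩
    simp [hi0]

lemma exists_mul_conjTranspose_eq_and_mul_eq_one_of_posSemidef {Z : Matrix ι ι 𝕜}
    (hZ : Z.PosSemidef) :
    ∃ (B : Matrix ι (Fin Z.rank) 𝕜) (C : Matrix (Fin Z.rank) ι 𝕜), B * Bᴴ = Z ∧ C * B = 1 := by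
  obtain ⟨V, d, hV, hd0, hZV⟩ := exists_eq_mul_diagonal_mul_conjTranspose_of_isHermitian hZ.1
  let Δ (g : ℝ → ℝ) : Matrix (Fin Z.rank) (Fin Z.rank) 𝕜 := diagonal fun i ↦ (g (d i) : 𝕜)
  have hdiag : Vᴴ * Z * V = Δ id := by
    calc Vᴴ * Z * V = Vᴴ * (V * Δ id * Vᴴ) * V := congrArg (Vᴴ * · * V) hZV
      _ = (Vᴴ * V) * Δ id * (Vᴴ * V) := by simp only [Matrix.mul_assoc]
      _ = Δ id := by rw [hV, Matrix.one_mul, Matrix.mul_one]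
  have hd : ∀ i, 0 < d i := fun i ↦ by
    have h := posSemidef_diagonal_iff.1 (hdiag ▸ hZ.conjTranspose_mul_mul_same V) i
    exact (RCLike.ofReal_nonneg.1 h).lt_of_ne' (hd0 i)
  refine ⟨V * Δ Real.sqrt, Δ (fun x ↦ (Real.sqrt x)⁻¹) * Vᴴ, ?_, ?_⟩
  · have hsqrt : Δ Real.sqrt * (Δ Real.sqrt)ᴴ = diagonal fun i ↦ (d i : 𝕜) := by
      simp only [Δ, diagonal_conjTranspose, diagonal_mul_diagonal, Pi.star_apply, RCLike.star_def,
        RCLike.conj_ofReal, ← RCLike.ofReal_mul, Real.mul_self_sqrt (hd _).le]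
    conv_rhs => rw [hZV, ← hsqrt]
    simp only [conjTranspose_mul, Matrix.mul_assoc]
  · calc Δ (fun x ↦ (Real.sqrt x)⁻¹) * Vᴴ * (V * Δ Real.sqrt)
        = Δ (fun x ↦ (Real.sqrt x)⁻¹) * (Vᴴ * V) * Δ Real.sqrt := by
          simp only [Matrix.mul_assoc]
      _ = 1 := by
          simp only [hV, Matrix.mul_one, Δ, diagonal_mul_diagonal, ← RCLike.ofReal_mul,
            inv_mul_cancel₀ (Real.sqrt_ne_zero'.2 (hd _)), RCLike.ofReal_one, diagonal_one]

lemma one_add_smul_eq_conjStarAlgAut_diagonal [DecidableEq κ] {H : Matrix κ κ 𝕜}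
    (hH : H.IsHermitian) (s : ℝ) :
    1 + s • H = Unitary.conjStarAlgAut 𝕜 _ hH.eigenvectorUnitary
      (diagonal fun i ↦ ((1 + s * hH.eigenvalues i : ℝ) : 𝕜)) := by
  have hdiag : diagonal (fun i ↦ ((1 + s * hH.eigenvalues i : ℝ) : 𝕜)) =
      1 + (s : 𝕜) • diagonal (RCLike.ofReal ∘ hH.eigenvalues) := by
    rw [← diagonal_one, ← diagonal_smul, diagonal_add]
    congr 1
    ext i
    simp
  rw [hdiag, map_add, map_one, map_smul, ← hH.spectral_theorem,
    RCLike.real_smul_eq_coe_smul (K := 𝕜)]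

lemma exists_posSemidef_one_add_smul_rank_lt [DecidableEq κ] {H : Matrix κ κ 𝕜}
    (hH : H.IsHermitian) (hneg : ¬ H.PosSemidef) :
    ∃ s : ℝ, 0 < s ∧ (1 + s • H).PosSemidef ∧ (1 + s • H).rank < Fintype.card κ := by
  obtain ⟨j, hj⟩ : ∃ j, hH.eigenvalues j < 0 := by
    by_contra! h
    exact hneg (hH.posSemidef_iff_eigenvalues_nonneg.2 h)
  obtain ⟨i, -, hmin⟩ := Finset.univ.exists_min_image hH.eigenvalues ⟨j, Finset.mem_univ j⟩
  have hi : hH.eigenvalues i < 0 := (hmin j (Finset.mem_univ j)).trans_lt hj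
  have hs : 0 < (-hH.eigenvalues i)⁻¹ := inv_pos.2 (neg_pos.2 hi)
  have hsi : (-hH.eigenvalues i)⁻¹ * hH.eigenvalues i = -1 := by
    rw [inv_neg, neg_mul, inv_mul_cancel₀ hi.ne]
  have hzero : ((1 + (-hH.eigenvalues i)⁻¹ * hH.eigenvalues i : ℝ) : 𝕜) = 0 := by
    rw [hsi, add_neg_cancel, RCLike.ofReal_zero]
  refine ⟨(-hH.eigenvalues i)⁻¹, hs, ?_, ?_⟩ <;>
    rw [one_add_smul_eq_conjStarAlgAut_diagonal hH, Unitary.conjStarAlgAut_apply]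
  · refine PosSemidef.mul_mul_conjTranspose_same (PosSemidef.diagonal fun l ↦ ?_) _
    have hl := mul_le_mul_of_nonneg_left (hmin l (Finset.mem_univ l)) hs.le
    exact RCLike.ofReal_nonneg.2 (by linarith)
  · refine ((rank_mul_le_left _ _).trans (rank_mul_le_right _ _)).trans_lt ?_
    rw [rank_diagonal]
    exact Fintype.card_subtype_lt (x := i) (not_not.2 hzero)

lemma eq_mul_mul_conjTranspose_of_mulVec_eq_zero [DecidableEq κ] {B : Matrix ι κ 𝕜}
    {C : Matrix κ ι 𝕜} {D : Matrix ι ι 𝕜} (hCB : C * B = 1) (hD : D.IsHermitian)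
    (hker : ∀ x, Bᴴ *ᵥ x = 0 → D *ᵥ x = 0) : D = B * (C * D * Cᴴ) * Bᴴ := by
  classical
  have hBC : Bᴴ * Cᴴ = 1 := by rw [← conjTranspose_mul, hCB, conjTranspose_one]
  have hB : Bᴴ * (1 - Cᴴ * Bᴴ) = 0 := by
    rw [Matrix.mul_sub, ← Matrix.mul_assoc, hBC, Matrix.one_mul, Matrix.mul_one, sub_self]
  have hright : D * (Cᴴ * Bᴴ) = D := by
    have h : D * (1 - Cᴴ * Bᴴ) = 0 := by
      ext a b
      exact congrFun (hker ((1 - Cᴴ * Bᴴ).col b) (by ext c; exact congrFun₂ hB c b)) a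
    rw [Matrix.mul_sub, Matrix.mul_one, sub_eq_zero] at h
    exact h.symm
  have hleft : B * C * D = D := by
    simpa only [conjTranspose_mul, conjTranspose_conjTranspose, hD.eq] using
      congrArg conjTranspose hright
  calc D = B * C * (D * (Cᴴ * Bᴴ)) := by rw [hright, hleft]
    _ = B * (C * D * Cᴴ) * Bᴴ := by simp only [Matrix.mul_assoc]

lemma exists_posSemidef_add_smul_rank_lt {Z D : Matrix ι ι 𝕜} (hZ : Z.PosSemidef)
    (hD : D.IsHermitian) (hneg : ¬ D.PosSemidef) (hker : ∀ x, Z *ᵥ x = 0 → D *ᵥ x = 0) :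
    ∃ s : ℝ, 0 < s ∧ (Z + s • D).PosSemidef ∧ (Z + s • D).rank < Z.rank := by
  obtain ⟨B, C, hB, hCB⟩ := exists_mul_conjTranspose_eq_and_mul_eq_one_of_posSemidef hZ
  have hfac : D = B * (C * D * Cᴴ) * Bᴴ :=
    eq_mul_mul_conjTranspose_of_mulVec_eq_zero hCB hD fun x hx ↦
      hker x (by rw [← hB, ← mulVec_mulVec, hx, mulVec_zero])
  have hneg' : ¬ (C * D * Cᴴ).PosSemidef := fun h ↦
    hneg (hfac ▸ h.mul_mul_conjTranspose_same B)
  obtain ⟨s, hs, hpos, hrank⟩ :=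
    exists_posSemidef_one_add_smul_rank_lt (isHermitian_mul_mul_conjTranspose C hD) hneg'
  have hray : Z + s • D = B * (1 + s • (C * D * Cᴴ)) * Bᴴ := by
    rw [Matrix.mul_add, Matrix.add_mul, Matrix.mul_one, Matrix.mul_smul, Matrix.smul_mul, ← hfac,
      hB]
  refine ⟨s, hs, hray ▸ hpos.mul_mul_conjTranspose_same B, ?_⟩
  rw [hray]
  rw [Fintype.card_fin] at hrank
  exact ((rank_mul_le_left _ _).trans (rank_mul_le_right _ _)).trans_lt hrank

lemma mulVec_eq_zero_of_add_mulVec_eq_zero {P Q : Matrix ι ι 𝕜} (hP : P.PosSemidef)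
    (hQ : Q.PosSemidef) {x : ι → 𝕜} (hx : (P + Q) *ᵥ x = 0) : P *ᵥ x = 0 := by
  have hsum : star x ⬝ᵥ P *ᵥ x + star x ⬝ᵥ Q *ᵥ x = 0 := by
    rw [← dotProduct_add, ← add_mulVec, hx, dotProduct_zero]
  have hPx := (add_eq_zero_iff_of_nonneg (hP.dotProduct_mulVec_nonneg x)
    (hQ.dotProduct_mulVec_nonneg x)).1 hsum
  exact (hP.dotProduct_mulVec_zero_iff x).1 hPx.1

end PosSemidef

section PartialTrace

variable {R ι κ : Type*} [Fintype κ]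

/-- The partial trace over the second tensor factor, which for a Choi matrix is the output space of
the map. -/
def partialTrace [Semiring R] : Matrix (ι × κ) (ι × κ) R →ₗ[R] Matrix ι ι R where
  toFun Z := of fun i j ↦ ∑ p, Z (i, p) (j, p)
  map_add' Z W := by ext i j; simp [Finset.sum_add_distrib]
  map_smul' c Z := by ext i j; simp [Finset.mul_sum]

lemma trace_partialTrace [Semiring R] [Fintype ι] (Z : Matrix (ι × κ) (ι × κ) R) :
    (partialTrace Z).trace = Z.trace := by
  simp [partialTrace, trace, Fintype.sum_prod_type]

lemma partialTrace_vecMulVec_vec [CommSemiring R] [StarRing R] (A : Matrix κ ι R) :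
    partialTrace (vecMulVec A.vec (star A.vec)) = (Aᴴ * A)ᵀ := by
  ext i j
  simp [partialTrace, vecMulVec_apply, mul_apply, mul_comm]

end PartialTrace

section Kraus

variable {σ ι κ : Type*} [Fintype σ] [Fintype ι]

/-- The completely positive map `X ↦ ∑ Aᵢ X Aᵢ*` with Kraus operators `Aᵢ`. -/
def krausMap (A : σ → Matrix κ ι ℂ) : Matrix ι ι ℂ →ₗ[ℂ] Matrix κ κ ℂ :=
  ∑ l, mulLeftLinearMap κ ℂ (A l) ∘ₗ mulRightLinearMap ι ℂ (A l)ᴴ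

lemma krausMap_apply (A : σ → Matrix κ ι ℂ) (X : Matrix ι ι ℂ) :
    krausMap A X = ∑ l, A l * X * (A l)ᴴ := by
  simp [krausMap, Matrix.mul_assoc]

end Kraus

section Choi

variable {m n : ℕ} {L L' D : Matrix (Fin m) (Fin m) ℂ →ₗ[ℂ] Matrix (Fin n) (Fin n) ℂ}

lemma choi_injective : Function.Injective (choi m n) := fun _ _ h ↦ by
  refine Matrix.ext_linearMap _ fun i j ↦ LinearMap.ext_ring ?_
  ext p q
  exact congrFun₂ h (i, p) (j, q)

lemma choi_add : choi m n (L + L') = choi m n L + choi m n L' := rfl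

lemma choi_sub : choi m n (L - L') = choi m n L - choi m n L' := rfl

lemma choi_neg : choi m n (-L) = -choi m n L := rfl

lemma choi_smul (s : ℝ) : choi m n (s • L) = s • choi m n L := rfl

lemma choi_krausMap {σ : Type*} [Fintype σ] (A : σ → Matrix (Fin n) (Fin m) ℂ) :
    choi m n (krausMap A) = ∑ l, vecMulVec (A l).vec (star (A l).vec) := by
  ext ⟨i, p⟩ ⟨j, q⟩
  simp [choi, krausMap_apply, Matrix.sum_apply, mul_apply, single_apply, ite_and, vecMulVec_apply]

lemma partialTrace_choi_krausMap_eq_one_iff {σ : Type*} [Fintype σ]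
    (A : σ → Matrix (Fin n) (Fin m) ℂ) :
    partialTrace (choi m n (krausMap A)) = 1 ↔ ∑ l, (A l)ᴴ * A l = 1 := by
  rw [choi_krausMap, map_sum]
  simp only [partialTrace_vecMulVec_vec]
  rw [← transpose_sum, transpose_eq_one]

lemma isChannel_iff_choi :
    IsChannel m n L ↔ (choi m n L).PosSemidef ∧ partialTrace (choi m n L) = 1 := by
  constructor
  · rintro ⟨k, A, hA, hone⟩
    obtain rfl : L = krausMap A := LinearMap.ext fun X ↦ by rw [hA, krausMap_apply]
    refine ⟨?_, (partialTrace_choi_krausMap_eq_one_iff A).2 hone⟩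
    exact posSemidef_iff_eq_sum_vecMulVec.2 ⟨k, fun l ↦ (A l).vec, choi_krausMap A⟩
  · rintro ⟨hpos, htr⟩
    obtain ⟨k, v, hv⟩ := posSemidef_iff_eq_sum_vecMulVec.1 hpos
    choose A hA using fun l ↦ vec_bijective.surjective (v l)
    obtain rfl : L = krausMap A := choi_injective (by simp only [hv, choi_krausMap, hA])
    exact ⟨k, A, krausMap_apply A, (partialTrace_choi_krausMap_eq_one_iff A).1 htr⟩

/-- `D` is parallel to the smallest face of the set of channels that contains `L`: the maps
`L ± ε D` are channels for small `ε > 0`. This is expressed through Choi matrices. -/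
structure IsFaceDirection (m n : ℕ)
    (L D : Matrix (Fin m) (Fin m) ℂ →ₗ[ℂ] Matrix (Fin n) (Fin n) ℂ) : Prop where
  isHermitian : (choi m n D).IsHermitian
  partialTrace_eq_zero : partialTrace (choi m n D) = 0
  mulVec_eq_zero : ∀ x, choi m n L *ᵥ x = 0 → choi m n D *ᵥ x = 0

lemma IsFaceDirection.neg (hD : IsFaceDirection m n L D) : IsFaceDirection m n L (-D) where
  isHermitian := hD.isHermitian.neg
  partialTrace_eq_zero := by rw [choi_neg, map_neg, hD.partialTrace_eq_zero, neg_zero]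
  mulVec_eq_zero x hx := by rw [choi_neg, neg_mulVec, hD.mulVec_eq_zero x hx, neg_zero]

lemma IsFaceDirection.not_posSemidef (hD : IsFaceDirection m n L D) (hD0 : D ≠ 0) :
    ¬ (choi m n D).PosSemidef := fun hpos ↦ by
  have htr : (choi m n D).trace = 0 := by
    rw [← trace_partialTrace, hD.partialTrace_eq_zero, trace_zero]
  exact hD0 (choi_injective (hpos.trace_eq_zero_iff.1 htr))

lemma IsChannel.exists_add_smul_rank_lt (hL : IsChannel m n L) (hD : IsFaceDirection m n L D)
    (hD0 : D ≠ 0) :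
    ∃ s : ℝ, 0 < s ∧ IsChannel m n (L + s • D) ∧
      (choi m n (L + s • D)).rank < (choi m n L).rank := by
  obtain ⟨hpos, htr⟩ := isChannel_iff_choi.1 hL
  obtain ⟨s, hs, hpos', hrank⟩ := exists_posSemidef_add_smul_rank_lt hpos hD.isHermitian
    (hD.not_posSemidef hD0) hD.mulVec_eq_zero
  refine ⟨s, hs, isChannel_iff_choi.2 ⟨hpos', ?_⟩, hrank⟩
  rw [choi_add, choi_smul, map_add, LinearMap.map_smul_of_tower, hD.partialTrace_eq_zero, smul_zero,
    add_zero, htr]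

lemma isFaceDirection_sub (h : IsChannel m n L) (h' : IsChannel m n L') {a b : ℝ} (ha : 0 < a)
    (hb : 0 < b) : IsFaceDirection m n (a • L + b • L') (L - L') := by
  obtain ⟨hpos, htr⟩ := isChannel_iff_choi.1 h
  obtain ⟨hpos', htr'⟩ := isChannel_iff_choi.1 h'
  refine ⟨hpos.1.sub hpos'.1, by rw [choi_sub, map_sub, htr, htr', sub_self], fun x hx ↦ ?_⟩
  rw [choi_add, choi_smul, choi_smul] at hx
  have hLx : a • choi m n L *ᵥ x = 0 := by
    rw [← smul_mulVec]
    exact mulVec_eq_zero_of_add_mulVec_eq_zero (hpos.smul ha.le) (hpos'.smul hb.le) hx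
  have hLx' : b • choi m n L' *ᵥ x = 0 := by
    rw [add_comm] at hx
    rw [← smul_mulVec]
    exact mulVec_eq_zero_of_add_mulVec_eq_zero (hpos'.smul hb.le) (hpos.smul ha.le) hx
  rw [choi_sub, sub_mulVec, (smul_eq_zero_iff_right ha.ne').1 hLx,
    (smul_eq_zero_iff_right hb.ne').1 hLx', sub_zero]

lemma IsChannel.exists_isFaceDirection_of_not_isExtremeChannel (hL : IsChannel m n L)
    (hnotext : ¬ IsExtremeChannel m n L) : ∃ D, IsFaceDirection m n L D ∧ D ≠ 0 := by
  contrapose! hnotext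
  refine ⟨hL, fun L₁ L₂ h₁ h₂ t ht0 ht1 hcomb ↦ ?_⟩
  simp only [← Complex.coe_algebraMap, algebraMap_smul] at hcomb
  obtain rfl : L₁ = L₂ := sub_eq_zero.1 <|
    hnotext (L₁ - L₂) (hcomb ▸ isFaceDirection_sub h₁ h₂ ht0 (sub_pos.2 ht1))
  rw [Convex.combo_self (add_sub_cancel t 1)] at hcomb
  exact ⟨hcomb.symm, hcomb.symm⟩

end Choi

lemma smul_add_smul_add_smul_neg_eq {K E : Type*} [Field K] [AddCommGroup E] [Module K E]
    {s s' : K} (h : s + s' ≠ 0) (x d : E) :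
    (s' / (s + s')) • (x + s • d) + (1 - s' / (s + s')) • (x + s' • -d) = x := by
  match_scalars <;> field_simp <;> ring

/-- a nonextreme channel with `rank Z(L) = k` is a proper convex combination of
two channels of Choi rank at most `k − 1`. -/
theorem stmt11 (m n k : ℕ) (L : Matrix (Fin m) (Fin m) ℂ →ₗ[ℂ] Matrix (Fin n) (Fin n) ℂ)
    (hL : IsChannel m n L) (hrank : (choi m n L).rank = k)
    (hnotext : ¬ IsExtremeChannel m n L) :
    ∃ (L₁ L₂ : Matrix (Fin m) (Fin m) ℂ →ₗ[ℂ] Matrix (Fin n) (Fin n) ℂ) (t : ℝ),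
      IsChannel m n L₁ ∧ IsChannel m n L₂ ∧
      (choi m n L₁).rank ≤ k - 1 ∧ (choi m n L₂).rank ≤ k - 1 ∧
      0 < t ∧ t < 1 ∧ L = (t : ℂ) • L₁ + ((1 - t : ℝ) : ℂ) • L₂ := by
  obtain ⟨D, hD, hD0⟩ := hL.exists_isFaceDirection_of_not_isExtremeChannel hnotext
  obtain ⟨s, hs, hL₁, hrank₁⟩ := hL.exists_add_smul_rank_lt hD hD0
  obtain ⟨s', hs', hL₂, hrank₂⟩ := hL.exists_add_smul_rank_lt hD.neg (neg_ne_zero.2 hD0)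
  have hsum : 0 < s + s' := add_pos hs hs'
  refine ⟨L + s • D, L + s' • -D, s' / (s + s'), hL₁, hL₂, by omega, by omega,
    div_pos hs' hsum, (div_lt_one hsum).2 (by linarith), ?_⟩
  simp only [← Complex.coe_algebraMap, algebraMap_smul]
  exact (smul_add_smul_add_smul_neg_eq hsum.ne' L D).symm
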